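/- Let K ≥ 1 be an integer, P a real n×n̄ matrix, and for each k ≤ K let f_k ≥ 1 and S^{k1},…,S^{k n̄} be symmetric f_k×f_k matrices defining S_k[z] = ∑_i z_i S^{ki}, such that z = 0 whenever S_k[z] = 0 for all k; let 𝒯 ⊆ ℝ_{≥0}^K be a nonempty convex compact monotone set containing a point with all coordinates positive. Let A be a symmetric n×n matrix, b ∈ ℝ^n, s > 0, and set Q = PᵀAP, q = Pᵀb, Q_+ = [[Q, q],[qᵀ, 0]]. Then Opt_*[s] ≤ Opt[s], where Opt_*[s] = sup{ xᵀAx + 2bᵀx : x ∈ 𝒳[s] } and Opt[s] = inf{ s·φ_𝒯(λ[Λ]) + μ : Λ = (Λ_1,…,Λ_K), Λ_k ∈ S^{f_k} positive semidefinite, μ ≥ 0, Q_+ ⪯ BlockDiag(∑_k 𝒮_k^*[Λ_k], μ) }. -/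

import Mathlib

open Matrix BigOperators

noncomputable section

/-- The spectratope `𝒳[s]`: image under `z ↦ P z` of the set of `z` such that
`S_k[z]² ⪯ s t_k I` for some `t ∈ 𝒯`, where `S_k[z] = ∑ i z_i S^{ki}`. -/
def spectratope {n nb K : ℕ} (f : Fin K → ℕ) (P : Matrix (Fin n) (Fin nb) ℝ)
    (Smat : (k : Fin K) → Fin nb → Matrix (Fin (f k)) (Fin (f k)) ℝ)
    (T : Set (Fin K → ℝ)) (s : ℝ) : Set (Fin n → ℝ) :=
  {x | ∃ z : Fin nb → ℝ, ∃ t ∈ T, x = P *ᵥ z ∧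
    ∀ k, ((s * t k) • (1 : Matrix (Fin (f k)) (Fin (f k)) ℝ)
            - (∑ i, z i • Smat k i) ^ 2).PosSemidef}

/-- Support function `φ_𝒯(λ) = max_{t ∈ 𝒯} λᵀ t`. -/
def suppFn {K : ℕ} (T : Set (Fin K → ℝ)) (lam : Fin K → ℝ) : ℝ :=
  sSup ((fun t => ∑ k, lam k * t k) '' T)

/-- `𝒮_k^*[Λ]`, the matrix with entries `Tr(Λ (S^{ki} S^{kj} + S^{kj} S^{ki})/2)`. -/
def calSstar {nb fk : ℕ} (Sm : Fin nb → Matrix (Fin fk) (Fin fk) ℝ)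
    (Λ : Matrix (Fin fk) (Fin fk) ℝ) : Matrix (Fin nb) (Fin nb) ℝ :=
  Matrix.of fun i j => (Λ * ((1 / 2 : ℝ) • (Sm i * Sm j + Sm j * Sm i))).trace

/-- `λ[Λ] = (Tr Λ_1, …, Tr Λ_K)`. -/
def lamOf {K : ℕ} {f : Fin K → ℕ}
    (Λ : (k : Fin K) → Matrix (Fin (f k)) (Fin (f k)) ℝ) : Fin K → ℝ :=
  fun k => (Λ k).trace

/-- `Q_+ = [[Q, q],[qᵀ, 0]]`. -/
def qPlus {m : ℕ} (Q : Matrix (Fin m) (Fin m) ℝ) (q : Fin m → ℝ) :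
    Matrix (Fin m ⊕ Unit) (Fin m ⊕ Unit) ℝ :=
  Matrix.fromBlocks Q (Matrix.of fun i _ => q i) (Matrix.of fun _ j => q j) 0

/-- `BlockDiag(M, μ)`. -/
def blockDiagOne {m : ℕ} (M : Matrix (Fin m) (Fin m) ℝ) (μ : ℝ) :
    Matrix (Fin m ⊕ Unit) (Fin m ⊕ Unit) ℝ :=
  Matrix.fromBlocks M 0 0 (Matrix.of fun _ _ => μ)

/-!
Write `x = P z` with `S_k[z]² ⪯ s t_k I`. Since `zᵀ 𝒮_k^*[Λ_k] z = Tr (Λ_k S_k[z]²)`, evaluating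
the dual constraint at the vector `(z, 1)` gives `xᵀ A x + 2 bᵀ x ≤ ∑ k, Tr (Λ_k S_k[z]²) + μ`. As
the trace of a product of positive semidefinite matrices is nonnegative, the right side is at most
`s ∑ k, t_k Tr Λ_k + μ ≤ s φ_𝒯(λ[Λ]) + μ`.

The infimum of an empty set of reals is `0`, so it also has to be shown that the dual problem is
feasible: by nondegeneracy `∑ k, 𝒮_k^*[I]` is positive definite, hence a large multiple of
`BlockDiag(∑ k, 𝒮_k^*[I], 1)` dominates `Q_+`.
-/

section Matrix

open scoped ComplexOrder MatrixOrder

variable {m n R 𝕜 : Type*} [RCLike 𝕜]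

lemma dotProduct_fromBlocks_mulVec [Fintype m] [Fintype n] [NonUnitalNonAssocSemiring R]
    (A : Matrix m m R) (B : Matrix m n R) (C : Matrix n m R) (D : Matrix n n R)
    (u x : m → R) (v y : n → R) :
    Sum.elim u v ⬝ᵥ fromBlocks A B C D *ᵥ Sum.elim x y =
      u ⬝ᵥ A *ᵥ x + u ⬝ᵥ B *ᵥ y + (v ⬝ᵥ C *ᵥ x + v ⬝ᵥ D *ᵥ y) := by
  rw [fromBlocks_mulVec, Sum.elim_comp_inl, Sum.elim_comp_inr, sumElim_dotProduct_sumElim,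
    dotProduct_add, dotProduct_add]

lemma isSymm_sum {ι : Type*} [AddCommMonoid R] (s : Finset ι) {M : ι → Matrix n n R}
    (hM : ∀ i ∈ s, (M i).IsSymm) : (∑ i ∈ s, M i).IsSymm := by
  rw [IsSymm, transpose_sum]
  exact Finset.sum_congr rfl hM

lemma isSymm_transpose_mul_mul [Fintype m] [CommSemiring R] (P : Matrix m n R)
    {A : Matrix m m R} (hA : A.IsSymm) : (Pᵀ * A * P).IsSymm := by
  rw [IsSymm, transpose_mul, transpose_mul, hA.eq, transpose_transpose, Matrix.mul_assoc]

lemma dotProduct_transpose_mul_mul_mulVec [Fintype m] [Fintype n] [CommSemiring R]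
    (P : Matrix m n R) (A : Matrix m m R) (z : n → R) :
    z ⬝ᵥ (Pᵀ * A * P) *ᵥ z = (P *ᵥ z) ⬝ᵥ A *ᵥ (P *ᵥ z) := by
  rw [← mulVec_mulVec, ← mulVec_mulVec, dotProduct_mulVec z, vecMul_transpose]

lemma posDef_fromBlocks_zero [Finite m] [Finite n] {A : Matrix m m 𝕜} {D : Matrix n n 𝕜}
    (hA : A.PosDef) (hD : D.PosDef) : (fromBlocks A 0 0 D).PosDef := by
  cases nonempty_fintype m
  cases nonempty_fintype n
  refine .of_dotProduct_mulVec_pos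
    (hA.isHermitian.fromBlocks conjTranspose_zero hD.isHermitian) fun w hw => ?_
  obtain ⟨x, y, rfl⟩ : ∃ x y, w = Sum.elim x y := ⟨_, _, (Sum.elim_comp_inl_inr w).symm⟩
  rw [Function.star_sumElim, dotProduct_fromBlocks_mulVec, zero_mulVec, zero_mulVec,
    dotProduct_zero, dotProduct_zero, add_zero, zero_add]
  rcases eq_or_ne x 0 with rfl | hx
  · have hy : y ≠ 0 := by
      rintro rfl
      exact hw Sum.elim_zero_zero
    exact add_pos_of_nonneg_of_pos (hA.posSemidef.dotProduct_mulVec_nonneg 0)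
      (hD.dotProduct_mulVec_pos hy)
  · exact add_pos_of_pos_of_nonneg (hA.dotProduct_mulVec_pos hx)
      (hD.posSemidef.dotProduct_mulVec_nonneg y)

lemma trace_mul_nonneg [Fintype n] {A B : Matrix n n 𝕜} (hA : A.PosSemidef)
    (hB : B.PosSemidef) : 0 ≤ (A * B).trace := by
  classical
  obtain ⟨C, rfl⟩ := CStarAlgebra.nonneg_iff_eq_star_mul_self.mp hA.nonneg
  rw [star_eq_conjTranspose, trace_mul_cycle, trace_mul_cycle]
  exact (hB.mul_mul_conjTranspose_same C).trace_nonneg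

lemma trace_mul_le_mul_trace [Fintype n] [DecidableEq n] {Λ M : Matrix n n 𝕜} {c : 𝕜}
    (hΛ : Λ.PosSemidef) (hM : (c • (1 : Matrix n n 𝕜) - M).PosSemidef) :
    (Λ * M).trace ≤ c * Λ.trace := by
  have h := trace_mul_nonneg hΛ hM
  rwa [mul_sub, trace_sub, mul_smul_comm, mul_one, trace_smul, smul_eq_mul, sub_nonneg] at h

lemma sq_eq_conjTranspose_mul_self [Fintype n] [DecidableEq n] [Semiring R] [Star R]
    {X : Matrix n n R} (hX : X.IsHermitian) : X ^ 2 = Xᴴ * X := by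
  rw [hX.eq, sq]

lemma trace_sq_nonneg [Fintype n] [DecidableEq n] {X : Matrix n n 𝕜} (hX : X.IsHermitian) :
    0 ≤ (X ^ 2).trace := by
  rw [sq_eq_conjTranspose_mul_self hX]
  exact (posSemidef_conjTranspose_mul_self X).trace_nonneg

lemma trace_sq_pos [Fintype n] [DecidableEq n] {X : Matrix n n 𝕜} (hX : X.IsHermitian)
    (h0 : X ≠ 0) : 0 < (X ^ 2).trace := by
  refine (trace_sq_nonneg hX).lt_of_ne' ?_
  rw [sq_eq_conjTranspose_mul_self hX]
  exact trace_conjTranspose_mul_self_eq_zero_iff.not.mpr h0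

lemma exists_nonneg_posSemidef_smul_sub [Finite n] {B H : Matrix n n 𝕜} (hB : B.PosDef)
    (hH : H.IsHermitian) : ∃ c : ℝ, 0 ≤ c ∧ (c • B - H).PosSemidef := by
  classical
  cases nonempty_fintype n
  -- Congruence by a square root of `B` reduces the claim to `B = 1`.
  obtain ⟨C, hC, rfl⟩ := CStarAlgebra.isStrictlyPositive_iff_eq_star_mul_self.mp
    hB.isStrictlyPositive
  have hdet : IsUnit C.det := (isUnit_iff_isUnit_det C).mp hC
  have hH' : IsSelfAdjoint (C⁻¹ᴴ * H * C⁻¹) := isHermitian_conjTranspose_mul_mul C⁻¹ hH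
  obtain ⟨c, hc⟩ : BddAbove (spectrum ℝ (C⁻¹ᴴ * H * C⁻¹)) := finite_real_spectrum.bddAbove
  have hle : C⁻¹ᴴ * H * C⁻¹ ≤ algebraMap ℝ _ (max c 0) :=
    le_algebraMap_of_spectrum_le (fun x hx => (hc hx).trans (le_max_left _ _)) hH'
  have hinv : Cᴴ * (C⁻¹ᴴ * H * C⁻¹) * C = H := by
    rw [Matrix.mul_assoc, nonsing_inv_mul_cancel_right _ _ hdet, ← Matrix.mul_assoc,
      ← conjTranspose_mul, nonsing_inv_mul _ hdet, conjTranspose_one, Matrix.one_mul]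
  refine ⟨max c 0, le_max_right _ _, ?_⟩
  have h := (le_iff.mp hle).conjTranspose_mul_mul_same C
  rwa [mul_sub, sub_mul, hinv, Algebra.algebraMap_eq_smul_one, mul_smul_comm, mul_one,
    smul_mul_assoc] at h

end Matrix

lemma sum_mul_le_suppFn {K : ℕ} {T : Set (Fin K → ℝ)} (hT : BddAbove T) {lam t : Fin K → ℝ}
    (hlam : 0 ≤ lam) (ht : t ∈ T) : ∑ k, lam k * t k ≤ suppFn T lam :=
  have hmono : Monotone fun t : Fin K → ℝ => ∑ k, lam k * t k := fun _ _ h =>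
    Finset.sum_le_sum fun k _ => mul_le_mul_of_nonneg_left (h k) (hlam k)
  le_csSup (hmono.map_bddAbove hT) ⟨t, ht, rfl⟩

section BlockMatrices

variable {m : ℕ}

lemma blockDiagOne_smul (c : ℝ) (M : Matrix (Fin m) (Fin m) ℝ) (μ : ℝ) :
    blockDiagOne (c • M) (c * μ) = c • blockDiagOne M μ := by
  rw [blockDiagOne, blockDiagOne, fromBlocks_smul, smul_zero, smul_zero]
  rfl

lemma posDef_blockDiagOne {M : Matrix (Fin m) (Fin m) ℝ} {μ : ℝ} (hM : M.PosDef) (hμ : 0 < μ) :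
    (blockDiagOne M μ).PosDef := by
  have hblock : (Matrix.of fun _ _ => μ) = diagonal fun _ : Unit => μ := by
    ext
    rfl
  refine posDef_fromBlocks_zero hM ?_
  rw [hblock]
  exact .diagonal fun _ => hμ

lemma dotProduct_blockDiagOne_mulVec (M : Matrix (Fin m) (Fin m) ℝ) (μ : ℝ) (z : Fin m → ℝ) :
    Sum.elim z 1 ⬝ᵥ blockDiagOne M μ *ᵥ Sum.elim z 1 = z ⬝ᵥ M *ᵥ z + μ := by
  rw [blockDiagOne, dotProduct_fromBlocks_mulVec]
  simp [mulVec, dotProduct]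

lemma isHermitian_qPlus {Q : Matrix (Fin m) (Fin m) ℝ} (hQ : Q.IsSymm) (q : Fin m → ℝ) :
    (qPlus Q q).IsHermitian :=
  isHermitian_iff_isSymm.mpr (hQ.fromBlocks rfl rfl)

lemma dotProduct_qPlus_mulVec (Q : Matrix (Fin m) (Fin m) ℝ) (q z : Fin m → ℝ) :
    Sum.elim z 1 ⬝ᵥ qPlus Q q *ᵥ Sum.elim z 1 = z ⬝ᵥ Q *ᵥ z + 2 * (q ⬝ᵥ z) := by
  have hcol : (Matrix.of fun i (_ : Unit) => q i) *ᵥ 1 = q := by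
    ext i
    simp [mulVec, dotProduct]
  have hrow : 1 ⬝ᵥ (Matrix.of fun (_ : Unit) j => q j) *ᵥ z = q ⬝ᵥ z := by
    simp [mulVec, dotProduct]
  rw [qPlus, dotProduct_fromBlocks_mulVec, hcol, hrow, zero_mulVec, dotProduct_zero,
    dotProduct_comm z q]
  ring

end BlockMatrices

section CalSstar

variable {m d : ℕ} (S : Fin m → Matrix (Fin d) (Fin d) ℝ)

lemma isSymm_calSstar (Λ : Matrix (Fin d) (Fin d) ℝ) : (calSstar S Λ).IsSymm := by
  ext i j
  rw [transpose_apply, calSstar, of_apply, of_apply, add_comm]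

lemma calSstar_smul (c : ℝ) (Λ : Matrix (Fin d) (Fin d) ℝ) :
    calSstar S (c • Λ) = c • calSstar S Λ := by
  ext i j
  rw [Matrix.smul_apply, calSstar, calSstar, of_apply, of_apply, smul_mul_assoc, trace_smul]

lemma dotProduct_calSstar_mulVec (Λ : Matrix (Fin d) (Fin d) ℝ) (z : Fin m → ℝ) :
    z ⬝ᵥ calSstar S Λ *ᵥ z = (Λ * (∑ i, z i • S i) ^ 2).trace := by
  let F : Fin m → Fin m → ℝ := fun i j => z i * z j * (Λ * (S i * S j)).trace
  have hl : z ⬝ᵥ calSstar S Λ *ᵥ z = 1 / 2 * (∑ i, ∑ j, F i j + ∑ i, ∑ j, F j i) := by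
    simp only [dotProduct, mulVec, calSstar, of_apply, Finset.mul_sum, ← Finset.sum_add_distrib,
      mul_smul_comm, trace_smul, mul_add, trace_add, smul_eq_mul, F]
    refine Finset.sum_congr rfl fun i _ => Finset.sum_congr rfl fun j _ => ?_
    ring
  have hr : (Λ * (∑ i, z i • S i) ^ 2).trace = ∑ i, ∑ j, F i j := by
    simp_rw [sq, Finset.sum_mul_sum, smul_mul_smul_comm, Finset.mul_sum, trace_sum,
      mul_smul_comm, trace_smul, smul_eq_mul, F]
  rw [hl, hr, Finset.sum_comm (f := fun i j => F j i)]
  ring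

end CalSstar

section Spectratope

variable {n m K : ℕ} {f : Fin K → ℕ} {P : Matrix (Fin n) (Fin m) ℝ}
  {S : (k : Fin K) → Fin m → Matrix (Fin (f k)) (Fin (f k)) ℝ} {T : Set (Fin K → ℝ)} {s : ℝ}

lemma zero_mem_spectratope (hs : 0 ≤ s) {t : Fin K → ℝ} (ht : t ∈ T) (ht0 : ∀ k, 0 ≤ t k) :
    0 ∈ spectratope f P S T s :=
  ⟨0, t, ht, (mulVec_zero P).symm, fun k => by
    simpa using PosSemidef.one.smul (mul_nonneg hs (ht0 k))⟩

lemma dotProduct_sum_calSstar_mulVec (Λ : (k : Fin K) → Matrix (Fin (f k)) (Fin (f k)) ℝ)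
    (z : Fin m → ℝ) :
    z ⬝ᵥ (∑ k, calSstar (S k) (Λ k)) *ᵥ z = ∑ k, (Λ k * (∑ i, z i • S k i) ^ 2).trace := by
  simp_rw [sum_mulVec, dotProduct_sum, dotProduct_calSstar_mulVec]

lemma posDef_sum_calSstar_one (hS : ∀ k i, (S k i).IsSymm)
    (hnd : ∀ z : Fin m → ℝ, (∀ k, ∑ i, z i • S k i = 0) → z = 0) :
    (∑ k, calSstar (S k) 1).PosDef := by
  refine .of_dotProduct_mulVec_pos ?_ fun z hz => ?_
  · exact isHermitian_iff_isSymm.mpr (isSymm_sum _ fun k _ => isSymm_calSstar (S k) 1)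
  have hherm (k) : (∑ i, z i • S k i).IsHermitian :=
    isHermitian_iff_isSymm.mpr (isSymm_sum _ fun i _ => (hS k i).smul (z i))
  obtain ⟨k, hk⟩ : ∃ k, ∑ i, z i • S k i ≠ 0 := by
    by_contra! h
    exact hz (hnd z h)
  rw [star_trivial, dotProduct_sum_calSstar_mulVec]
  simp only [Matrix.one_mul]
  exact Finset.sum_pos' (fun l _ => trace_sq_nonneg (hherm l))
    ⟨k, Finset.mem_univ k, trace_sq_pos (hherm k) hk⟩

theorem exists_posSemidef_blockDiagOne_sub_qPlus (hS : ∀ k i, (S k i).IsSymm)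
    (hnd : ∀ z : Fin m → ℝ, (∀ k, ∑ i, z i • S k i = 0) → z = 0)
    {Q : Matrix (Fin m) (Fin m) ℝ} (hQ : Q.IsSymm) (q : Fin m → ℝ) :
    ∃ c : ℝ, 0 ≤ c ∧ (blockDiagOne (∑ k, calSstar (S k) (c • 1)) c - qPlus Q q).PosSemidef := by
  have hB : (blockDiagOne (∑ k, calSstar (S k) 1) 1).PosDef :=
    posDef_blockDiagOne (posDef_sum_calSstar_one hS hnd) one_pos
  obtain ⟨c, hc, h⟩ := exists_nonneg_posSemidef_smul_sub hB (isHermitian_qPlus hQ q)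
  refine ⟨c, hc, ?_⟩
  simpa only [calSstar_smul, ← Finset.smul_sum, ← blockDiagOne_smul, mul_one] using h

lemma sum_trace_mul_le_mul_suppFn (hT : BddAbove T) (hs : 0 ≤ s) {t : Fin K → ℝ} (ht : t ∈ T)
    {X Λ : (k : Fin K) → Matrix (Fin (f k)) (Fin (f k)) ℝ} (hΛ : ∀ k, (Λ k).PosSemidef)
    (hX : ∀ k, ((s * t k) • (1 : Matrix (Fin (f k)) (Fin (f k)) ℝ) - X k).PosSemidef) :
    ∑ k, (Λ k * X k).trace ≤ s * suppFn T (lamOf Λ) :=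
  calc
    ∑ k, (Λ k * X k).trace ≤ ∑ k, s * t k * (Λ k).trace :=
      Finset.sum_le_sum fun k _ => trace_mul_le_mul_trace (hΛ k) (hX k)
    _ = s * ∑ k, lamOf Λ k * t k := by
      simp only [lamOf, Finset.mul_sum, mul_assoc, mul_comm]
    _ ≤ s * suppFn T (lamOf Λ) :=
      mul_le_mul_of_nonneg_left (sum_mul_le_suppFn hT (fun k => (hΛ k).trace_nonneg) ht) hs

theorem quadratic_le_of_mem_spectratope (hT : BddAbove T) (hs : 0 ≤ s) {x : Fin n → ℝ}
    (hx : x ∈ spectratope f P S T s) {A : Matrix (Fin n) (Fin n) ℝ} {b : Fin n → ℝ}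
    {Λ : (k : Fin K) → Matrix (Fin (f k)) (Fin (f k)) ℝ} {μ : ℝ} (hΛ : ∀ k, (Λ k).PosSemidef)
    (hfeas : (blockDiagOne (∑ k, calSstar (S k) (Λ k)) μ
      - qPlus (Pᵀ * A * P) (Pᵀ *ᵥ b)).PosSemidef) :
    x ⬝ᵥ A *ᵥ x + 2 * (b ⬝ᵥ x) ≤ s * suppFn T (lamOf Λ) + μ := by
  obtain ⟨z, t, ht, rfl, hz⟩ := hx
  have h := hfeas.dotProduct_mulVec_nonneg (Sum.elim z 1)
  rw [star_trivial, sub_mulVec, dotProduct_sub, sub_nonneg, dotProduct_blockDiagOne_mulVec,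
    dotProduct_qPlus_mulVec, dotProduct_transpose_mul_mul_mulVec, mulVec_transpose,
    ← dotProduct_mulVec, dotProduct_sum_calSstar_mulVec] at h
  exact h.trans (add_le_add_left (sum_trace_mul_le_mul_suppFn hT hs ht hΛ hz) μ)

end Spectratope

theorem stmt2_general {n nb K : ℕ} (P : Matrix (Fin n) (Fin nb) ℝ) (f : Fin K → ℕ)
    (Smat : (k : Fin K) → Fin nb → Matrix (Fin (f k)) (Fin (f k)) ℝ)
    (hSm : ∀ k i, (Smat k i).IsSymm)
    (hnd : ∀ z : Fin nb → ℝ, (∀ k, (∑ i, z i • Smat k i) = 0) → z = 0)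
    (T : Set (Fin K → ℝ)) (hT : BddAbove T)
    (A : Matrix (Fin n) (Fin n) ℝ) (hA : A.IsSymm) (b : Fin n → ℝ) (s : ℝ) (hs : 0 ≤ s)
    (hne : (spectratope f P Smat T s).Nonempty) :
    sSup {v : ℝ | ∃ x ∈ spectratope f P Smat T s, v = x ⬝ᵥ A *ᵥ x + 2 * (b ⬝ᵥ x)} ≤
      sInf {v : ℝ | ∃ Λ : (k : Fin K) → Matrix (Fin (f k)) (Fin (f k)) ℝ, ∃ μ : ℝ,
        (∀ k, (Λ k).PosSemidef) ∧ 0 ≤ μ ∧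
        (blockDiagOne (∑ k, calSstar (Smat k) (Λ k)) μ
          - qPlus (Pᵀ * A * P) (Pᵀ *ᵥ b)).PosSemidef ∧
        v = s * suppFn T (lamOf Λ) + μ} := by
  obtain ⟨x₀, hx₀⟩ := hne
  have hQ : (Pᵀ * A * P).IsSymm := isSymm_transpose_mul_mul P hA
  obtain ⟨c, hc, hfeas⟩ := exists_posSemidef_blockDiagOne_sub_qPlus hSm hnd hQ (Pᵀ *ᵥ b)
  refine csSup_le ⟨_, x₀, hx₀, rfl⟩ ?_
  rintro _ ⟨x, hx, rfl⟩
  refine le_csInf ⟨_, fun _ => c • 1, c, fun _ => PosSemidef.one.smul hc, hc, hfeas, rfl⟩ ?_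
  rintro _ ⟨Λ, μ, hΛ, -, hfeas', rfl⟩
  exact quadratic_le_of_mem_spectratope hT hs hx hΛ hfeas'

theorem stmt2 {n nb K : ℕ} (hK : 1 ≤ K)
    (P : Matrix (Fin n) (Fin nb) ℝ)
    (f : Fin K → ℕ) (hf : ∀ k, 1 ≤ f k)
    (Smat : (k : Fin K) → Fin nb → Matrix (Fin (f k)) (Fin (f k)) ℝ)
    (hSm : ∀ k i, (Smat k i).IsSymm)
    (hnd : ∀ z : Fin nb → ℝ, (∀ k, (∑ i, z i • Smat k i) = 0) → z = 0)
    (T : Set (Fin K → ℝ))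
    (hTne : T.Nonempty) (hTconv : Convex ℝ T) (hTcomp : IsCompact T)
    (hTnonneg : ∀ t ∈ T, ∀ k, 0 ≤ t k)
    (hTmono : ∀ t t' : Fin K → ℝ, (∀ k, 0 ≤ t k) → (∀ k, t k ≤ t' k) → t' ∈ T → t ∈ T)
    (hTpos : ∃ t ∈ T, ∀ k, 0 < t k)
    (A : Matrix (Fin n) (Fin n) ℝ) (hA : A.IsSymm) (b : Fin n → ℝ)
    (s : ℝ) (hs : 0 < s) :
    sSup {v : ℝ | ∃ x ∈ spectratope f P Smat T s, v = x ⬝ᵥ A *ᵥ x + 2 * (b ⬝ᵥ x)} ≤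
      sInf {v : ℝ | ∃ Λ : (k : Fin K) → Matrix (Fin (f k)) (Fin (f k)) ℝ, ∃ μ : ℝ,
        (∀ k, (Λ k).PosSemidef) ∧ 0 ≤ μ ∧
        (blockDiagOne (∑ k, calSstar (Smat k) (Λ k)) μ
          - qPlus (Pᵀ * A * P) (Pᵀ *ᵥ b)).PosSemidef ∧
        v = s * suppFn T (lamOf Λ) + μ} := by
  obtain ⟨t, ht⟩ := hTne
  exact stmt2_general P f Smat hSm hnd T hTcomp.isBounded.bddAbove A hA b s hs.le
    ⟨0, zero_mem_spectratope hs.le ht (hTnonneg t ht)⟩
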